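/- Let Q > 0 and let h : S² → S² be Q-Lipschitz with respect to the ambient Euclidean distance on ℝ³. For y ∈ [−1, 1], let μ_y be the pushforward of Lebesgue measure on [0, 1] under θ ↦ π_S(θ, y) = (√(1−y²)cos(2πθ), √(1−y²)sin(2πθ), y). Then for all y, y' ∈ [−1, 1] and every 1-Lipschitz function f : S² → ℝ, ∫ f d(h_*μ_y) − ∫ f d(h_*μ_{y'}) ≤ 2Q·√|y − y'|. In particular the Kantorovich distance satisfies d_K(h_*μ_y, h_*μ_{y'}) ≤ 2Q·√|y − y'|. -/

import Mathlib

open MeasureTheory Metric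
open scoped NNReal

/-- The cylindrical (Archimedes) parametrization of the unit sphere:
`π_S(θ, y) = (√(1−y²)cos(2πθ), √(1−y²)sin(2πθ), y)`. -/
noncomputable def piS (θ y : ℝ) : EuclideanSpace ℝ (Fin 3) :=
  (EuclideanSpace.equiv (Fin 3) ℝ).symm
    ![Real.sqrt (1 - y ^ 2) * Real.cos (2 * Real.pi * θ),
      Real.sqrt (1 - y ^ 2) * Real.sin (2 * Real.pi * θ), y]

/-- The uniform probability measure `μ_y` on the latitude circle of the unit sphere at height
`y`: the pushforward of Lebesgue measure on `[0,1]` under `θ ↦ π_S(θ, y)`, viewed as a measure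
on the sphere. -/
noncomputable def latitudeMeasure (y : ℝ) :
    Measure (sphere (0 : EuclideanSpace ℝ (Fin 3)) 1) :=
  Measure.comap Subtype.val
    (Measure.map (fun θ => piS θ y) (volume.restrict (Set.Icc (0 : ℝ) 1)))

/-!
Points with the same longitude `θ` couple `μ_y` with `μ_{y'}`, so it is enough to bound the chord
between `π_S(θ, y)` and `π_S(θ, y')`. The inner product of these unit vectors is
`√(1 - y²)√(1 - y'²) + y y'`. For `y' ≤ y` the product of the square roots is the geometric mean of
`(1 - y)(1 + y')` and the larger number `(1 + y)(1 - y')`, so it is at least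
`(1 - y)(1 + y') = 1 - (y - y') - y y'`. Hence the chord has length at most `√(2|y - y'|)`.
-/

lemma sqrt_two_mul_le_two_mul_sqrt (x : ℝ) : √(2 * x) ≤ 2 * √x := by
  rw [Real.sqrt_mul zero_le_two]
  gcongr
  exact Real.sqrt_le_self_iff.2 (.inr one_le_two)

variable {y y' θ : ℝ}

lemma one_sub_abs_sub_le_sqrt_mul_sqrt_add_mul
    (hy : y ∈ Set.Icc (-1) 1) (hy' : y' ∈ Set.Icc (-1) 1) :
    1 - |y - y'| ≤ √(1 - y ^ 2) * √(1 - y' ^ 2) + y * y' := by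
  wlog hle : y' ≤ y generalizing y y'
  · rw [abs_sub_comm, mul_comm √_, mul_comm y]
    exact this hy' hy (le_of_not_ge hle)
  obtain ⟨_, hy_le⟩ := hy
  obtain ⟨le_hy', _⟩ := hy'
  have hprod : 0 ≤ (1 - y) * (1 + y') := mul_nonneg (by linarith) (by linarith)
  have hsqrt : (1 - y) * (1 + y') ≤ √(1 - y ^ 2) * √(1 - y' ^ 2) := by
    rw [← Real.sqrt_mul (by nlinarith)]
    refine Real.le_sqrt_of_sq_le ?_
    calc ((1 - y) * (1 + y')) ^ 2
        ≤ ((1 - y) * (1 + y')) * ((1 + y) * (1 - y')) := by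
          rw [sq]
          exact mul_le_mul_of_nonneg_left (by linarith) hprod
      _ = (1 - y ^ 2) * (1 - y' ^ 2) := by ring
  rw [abs_of_nonneg (sub_nonneg.2 hle)]
  linarith

lemma inner_piS (θ y y' : ℝ) :
    inner ℝ (piS θ y) (piS θ y') = √(1 - y ^ 2) * √(1 - y' ^ 2) + y * y' := by
  simp only [piS, PiLp.inner_apply, Fin.sum_univ_three, RCLike.inner_apply, conj_trivial,
    PiLp.continuousLinearEquiv_symm_apply, EuclideanSpace.equiv, Matrix.cons_val]
  linear_combination
    √(1 - y ^ 2) * √(1 - y' ^ 2) * Real.sin_sq_add_cos_sq (2 * Real.pi * θ)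

lemma norm_piS (hy : y ∈ Set.Icc (-1) 1) : ‖piS θ y‖ = 1 := by
  have hsq : 0 ≤ 1 - y ^ 2 := by nlinarith [hy.1, hy.2]
  rw [norm_eq_sqrt_real_inner, inner_piS, Real.mul_self_sqrt hsq, Real.sqrt_eq_one]
  ring

lemma dist_piS_le (hy : y ∈ Set.Icc (-1) 1) (hy' : y' ∈ Set.Icc (-1) 1) :
    dist (piS θ y) (piS θ y') ≤ √(2 * |y - y'|) := by
  refine Real.le_sqrt_of_sq_le ?_
  rw [dist_eq_norm, norm_sub_sq_real, norm_piS hy, norm_piS hy', inner_piS]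
  linarith [one_sub_abs_sub_le_sqrt_mul_sqrt_add_mul hy hy']

lemma continuous_piS (y : ℝ) : Continuous fun θ ↦ piS θ y := by
  refine (EuclideanSpace.equiv (Fin 3) ℝ).symm.continuous.comp (continuous_pi fun i ↦ ?_)
  fin_cases i <;> simp only [Fin.reduceFinMk, Fin.zero_eta, Fin.mk_one, Matrix.cons_val] <;>
    fun_prop

/-- The parametrization `θ ↦ π_S(θ, y)` of the latitude circle at height `y ∈ [-1, 1]`, as a map
into the unit sphere. -/
noncomputable def latitudeCircle (hy : y ∈ Set.Icc (-1) 1) (θ : ℝ) :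
    sphere (0 : EuclideanSpace ℝ (Fin 3)) 1 :=
  ⟨piS θ y, mem_sphere_zero_iff_norm.2 (norm_piS hy)⟩

lemma continuous_latitudeCircle (hy : y ∈ Set.Icc (-1) 1) : Continuous (latitudeCircle hy) :=
  (continuous_piS y).subtype_mk _

lemma latitudeMeasure_eq_map (hy : y ∈ Set.Icc (-1) 1) :
    latitudeMeasure y = (volume.restrict (Set.Icc 0 1)).map (latitudeCircle hy) := by
  have hval : MeasurableEmbedding
      (Subtype.val : sphere (0 : EuclideanSpace ℝ (Fin 3)) 1 → EuclideanSpace ℝ (Fin 3)) :=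
    .subtype_coe isClosed_sphere.measurableSet
  rw [← hval.comap_map (Measure.map _ _),
    Measure.map_map hval.measurable (continuous_latitudeCircle hy).measurable]
  rfl

lemma dist_integral_map_le_of_lipschitzWith {Ω X E : Type*} [MeasurableSpace Ω]
    {P : Measure Ω} [IsProbabilityMeasure P] [PseudoMetricSpace X] [MeasurableSpace X]
    [NormedAddCommGroup E] [NormedSpace ℝ E] {u v : Ω → X} {g : X → E} {K : ℝ≥0} {δ : ℝ}
    (hu : AEMeasurable u P) (hv : AEMeasurable v P) (hg : LipschitzWith K g)
    (hgu : Integrable g (P.map u)) (hgv : Integrable g (P.map v))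
    (huv : ∀ᵐ ω ∂P, dist (u ω) (v ω) ≤ δ) :
    dist (∫ x, g x ∂P.map u) (∫ x, g x ∂P.map v) ≤ K * δ := by
  have hint_u : Integrable (fun ω ↦ g (u ω)) P := hgu.comp_aemeasurable hu
  have hint_v : Integrable (fun ω ↦ g (v ω)) P := hgv.comp_aemeasurable hv
  have hbound : ∀ᵐ ω ∂P, ‖g (u ω) - g (v ω)‖ ≤ K * δ := by
    filter_upwards [huv] with ω hω
    rw [← dist_eq_norm]
    exact hg.dist_le_mul_of_le hω
  rw [integral_map hu hgu.1, integral_map hv hgv.1, dist_eq_norm, ← integral_sub hint_u hint_v]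
  simpa using norm_integral_le_of_norm_le_const hbound

lemma dist_integral_latitudeMeasure_le {E : Type*} [NormedAddCommGroup E] [NormedSpace ℝ E]
    {g : sphere (0 : EuclideanSpace ℝ (Fin 3)) 1 → E} {K : ℝ≥0} (hg : LipschitzWith K g)
    (hy : y ∈ Set.Icc (-1) 1) (hy' : y' ∈ Set.Icc (-1) 1) :
    dist (∫ x, g x ∂latitudeMeasure y) (∫ x, g x ∂latitudeMeasure y') ≤
      K * √(2 * |y - y'|) := by
  have : IsProbabilityMeasure (volume.restrict (Set.Icc (0 : ℝ) 1)) := ⟨by simp⟩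
  have hint (ν : Measure (sphere (0 : EuclideanSpace ℝ (Fin 3)) 1)) [IsFiniteMeasure ν] :
      Integrable g ν := hg.continuous.integrable_of_hasCompactSupport (.of_compactSpace g)
  rw [latitudeMeasure_eq_map hy, latitudeMeasure_eq_map hy']
  exact dist_integral_map_le_of_lipschitzWith
    (continuous_latitudeCircle hy).aemeasurable (continuous_latitudeCircle hy').aemeasurable
    hg (hint _) (hint _) (.of_forall fun _ ↦ dist_piS_le hy hy')

theorem lipschitz_pushforward_latitude_holder_general {X : Type*} [PseudoEMetricSpace X]
    [MeasurableSpace X] [BorelSpace X] {Q K : ℝ≥0}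
    {h : sphere (0 : EuclideanSpace ℝ (Fin 3)) 1 → X} (hh : LipschitzWith Q h)
    (hy : y ∈ Set.Icc (-1) 1) (hy' : y' ∈ Set.Icc (-1) 1) {f : X → ℝ} (hf : LipschitzWith K f) :
    dist (∫ x, f x ∂(latitudeMeasure y).map h) (∫ x, f x ∂(latitudeMeasure y').map h) ≤
      K * Q * √(2 * |y - y'|) := by
  rw [integral_map hh.continuous.aemeasurable hf.continuous.aestronglyMeasurable,
    integral_map hh.continuous.aemeasurable hf.continuous.aestronglyMeasurable]
  exact_mod_cast dist_integral_latitudeMeasure_le (hf.comp hh) hy hy'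

/-- **Hölder continuity of pushed-forward latitude measures.** If `h : S² → S²` is `Q`-Lipschitz
(for the ambient Euclidean distance), then for all `y, y' ∈ [−1,1]` and every 1-Lipschitz
`f : S² → ℝ`, `∫ f d(h_*μ_y) − ∫ f d(h_*μ_{y'}) ≤ 2Q√|y − y'|`; hence
`d_K(h_*μ_y, h_*μ_{y'}) ≤ 2Q√|y − y'|`. -/
theorem lipschitz_pushforward_latitude_holder
    (Q : ℝ≥0) (hQ : 0 < Q)
    (h : sphere (0 : EuclideanSpace ℝ (Fin 3)) 1 → sphere (0 : EuclideanSpace ℝ (Fin 3)) 1)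
    (hh : LipschitzWith Q h)
    (y y' : ℝ) (hy : y ∈ Set.Icc (-1 : ℝ) 1) (hy' : y' ∈ Set.Icc (-1 : ℝ) 1)
    (f : sphere (0 : EuclideanSpace ℝ (Fin 3)) 1 → ℝ) (hf : LipschitzWith 1 f) :
    (∫ x, f x ∂(Measure.map h (latitudeMeasure y))) -
        ∫ x, f x ∂(Measure.map h (latitudeMeasure y')) ≤
      2 * (Q : ℝ) * Real.sqrt |y - y'| := by
  refine (le_abs_self _).trans
    ((lipschitz_pushforward_latitude_holder_general hh hy hy' hf).trans ?_)
  rw [NNReal.coe_one, one_mul, mul_comm 2 (Q : ℝ), mul_assoc]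
  exact mul_le_mul_of_nonneg_left (sqrt_two_mul_le_two_mul_sqrt _) Q.coe_nonneg
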